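/- A tau-structure associated to the Toda lattice derivations exists, and it is unique up to replacing Ω_{p,q} by Ω_{p,q} + c_{p,q} and S_p by S_p + a_p, where c_{p,q} = c_{q,p} and a_p are arbitrary constants. In particular, there is a unique canonical tau-structure, i.e., one for which every Ω_{p,q} and every S_p vanishes under the substitution v_i = 0, w_i = 0 for all i ∈ ℤ. -/

import Mathlib

open MvPolynomial

noncomputable section

/-- The ring 𝒜 = ℤ[v_i, w_i : i ∈ ℤ], with variables indexed by ℤ ⊕ ℤ
(`Sum.inl i` is `v_i`, `Sum.inr i` is `w_i`). -/
abbrev 𝒜 : Type := MvPolynomial (ℤ ⊕ ℤ) ℤ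

/-- The variable v_i. -/
def vV (i : ℤ) : 𝒜 := X (Sum.inl i)
/-- The variable w_i. -/
def wV (i : ℤ) : 𝒜 := X (Sum.inr i)

/-- The shift operator Λ, as a ring (ℤ-algebra) automorphism of 𝒜, with
Λ(v_i) = v_{i+1}, Λ(w_i) = w_{i+1}. -/
def Λs : 𝒜 ≃ₐ[ℤ] 𝒜 :=
  MvPolynomial.renameEquiv ℤ (Equiv.sumCongr (Equiv.addRight (1 : ℤ)) (Equiv.addRight (1 : ℤ)))

/-- Integer powers Λ^k of the shift automorphism. -/
def Λz (k : ℤ) : 𝒜 ≃ₐ[ℤ] 𝒜 := Λs ^ k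

/-- The identity difference operator, as its family of coefficients (coefficient of Λ^m). -/
def oneOp : ℤ → 𝒜 := fun m => if m = 0 then 1 else 0

/-- Left multiplication by L = Λ + v_0 + w_0 Λ^{-1} on difference operators,
written in terms of coefficients: `(L·P)_m = Λ(P_{m-1}) + v_0 P_m + w_0 Λ^{-1}(P_{m+1})`. -/
def mulL (P : ℤ → 𝒜) : ℤ → 𝒜 := fun m => Λs (P (m - 1)) + vV 0 * P m + wV 0 * Λs.symm (P (m + 1))

/-- The coefficients of the difference operator L^k. -/
def Lpow (k : ℕ) : ℤ → 𝒜 := mulL^[k] oneOp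

/-- The nonnegative part P_+ of a difference operator. -/
def plusPart (P : ℤ → 𝒜) : ℤ → 𝒜 := fun m => if 0 ≤ m then P m else 0

/-- Right multiplication by L on difference operators:
`(P·L)_m = P_{m-1} + P_m Λ^m(v_0) + P_{m+1} Λ^{m+1}(w_0)`. -/
def mulRL (P : ℤ → 𝒜) : ℤ → 𝒜 := fun m =>
  P (m - 1) + P m * Λz m (vV 0) + P (m + 1) * Λz (m + 1) (wV 0)

/-- The coefficients of the commutator [A_k, L] = A_k L - L A_k, where A_k = (L^{k+1})_+. -/
def brkt (k : ℕ) : ℤ → 𝒜 := fun m =>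
  mulRL (plusPart (Lpow (k + 1))) m - mulL (plusPart (Lpow (k + 1))) m

/-- The k-th Toda lattice derivation D_k : the unique admissible derivation of 𝒜
(i.e. derivation commuting with Λ) with D_k(v_0) = Coef([A_k,L],0),
D_k(w_0) = Coef([A_k,L],-1); hence D_k(v_i) = Λ^i(Coef([A_k,L],0)) and
D_k(w_i) = Λ^i(Coef([A_k,L],-1)). -/
def Dtoda (k : ℕ) : Derivation ℤ 𝒜 𝒜 :=
  MvPolynomial.mkDerivation ℤ (fun s => match s with
    | Sum.inl i => Λz i (brkt k 0)
    | Sum.inr i => Λz i (brkt k (-1)))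


/-- A tau-structure associated to the Toda lattice derivations: a family
(Ω_{p,q}, S_p)_{p,q ≥ 0} of elements of 𝒜 satisfying Ω_{p,q} = Ω_{q,p},
D_r(Ω_{p,q}) = D_q(Ω_{p,r}), (Λ - 1)(Ω_{p,q}) = D_q(S_p), and
w_0 (1 - Λ^{-1})(S_p) = D_p(w_0). -/
structure TauStructure where
  Ω : ℕ → ℕ → 𝒜
  S : ℕ → 𝒜
  symm : ∀ p q, Ω p q = Ω q p
  compat : ∀ p q r, Dtoda r (Ω p q) = Dtoda q (Ω p r)
  shift_eq : ∀ p q, Λs (Ω p q) - Ω p q = Dtoda q (S p)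
  w_eq : ∀ p, wV 0 * (S p - Λs.symm (S p)) = Dtoda p (wV 0)

/-- A tau-structure is canonical if all its members vanish under the substitution
v_i = 0, w_i = 0 for all i ∈ ℤ. -/
def TauStructure.IsCanonical (T : TauStructure) : Prop :=
  (∀ p q, MvPolynomial.eval (fun _ => (0 : ℤ)) (T.Ω p q) = 0) ∧
  (∀ p, MvPolynomial.eval (fun _ => (0 : ℤ)) (T.S p) = 0)

/-!
By the Lax equation `D_k L = [A_k, L]` with `A_k = (L^{k+1})_+`, the derivative `D_q (Res L^{p+1})`
is the residue of the commutator `[A_q, L^{p+1}]`. Residues of commutators of difference operators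
are `Λ`-coboundaries, so `S_p = Res L^{p+1}` admits some `Ω_{p,q}` with
`(Λ - 1) Ω_{p,q} = D_q S_p`. The only `Λ`-invariant polynomials are the constants, so `Ω_{p,q}` is
unique once its constant term is required to vanish. Every remaining identity between polynomials
without constant term may therefore be checked after applying `Λ - 1`, where it reduces
to the commutativity of the flows `D_k`. That commutativity is the zero-curvature
equation for the `A_k`, a consequence of the Rota-Baxter identity for the projection `P ↦ P_+`.
-/

open Multiplicative (ofAdd)

section LaxEquation

variable {E : Type*} [Ring E] {δ δ₁ δ₂ : E →+ E} {A A₁ A₂ L : E}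

theorem map_pow_eq_lie_of_map_eq_lie (hδ : ∀ x y, δ (x * y) = δ x * y + x * δ y)
    (hL : δ L = ⁅A, L⁆) (n : ℕ) : δ (L ^ n) = ⁅A, L ^ n⁆ := by
  induction n with
  | zero =>
    have h_one : δ 1 = 0 := by simpa using hδ 1 1
    simp [h_one, Ring.lie_def]
  | succ n ih =>
    rw [pow_succ, hδ, ih, hL]
    simp only [Ring.lie_def]
    noncomm_ring

theorem lax_flows_comm (hδ₁ : ∀ x y, δ₁ (x * y) = δ₁ x * y + x * δ₁ y)
    (hδ₂ : ∀ x y, δ₂ (x * y) = δ₂ x * y + x * δ₂ y) (hL₁ : δ₁ L = ⁅A₁, L⁆) (hL₂ : δ₂ L = ⁅A₂, L⁆)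
    (hcurv : δ₂ A₁ - δ₁ A₂ + ⁅A₁, A₂⁆ = 0) : δ₂ (δ₁ L) = δ₁ (δ₂ L) := by
  have h : δ₂ (δ₁ L) - δ₁ (δ₂ L) = ⁅δ₂ A₁ - δ₁ A₂ + ⁅A₁, A₂⁆, L⁆ := by
    simp only [hL₁, hL₂, hδ₁, hδ₂, Ring.lie_def, map_sub]
    noncomm_ring
  rwa [hcurv, Ring.lie_def, zero_mul, mul_zero, sub_zero, sub_eq_zero] at h

theorem lie_map_map_of_rotaBaxter {π : E →+ E}
    (hπ : ∀ x y, π x * π y = π (π x * y + x * π y - x * y)) {x y : E} (hxy : Commute x y) :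
    ⁅π x, π y⁆ = π ⁅π x, y⁆ - π ⁅π y, x⁆ := by
  rw [Ring.lie_def, hπ x y, hπ y x, hxy.eq, ← map_sub, ← map_sub, Ring.lie_def, Ring.lie_def]
  congr 1
  abel

end LaxEquation

section DifferenceOperators

open SkewMonoidAlgebra

section Coefficients

variable {R S G : Type*} [AddCommMonoid R] [AddCommMonoid S]

/-- The coefficientwise action of an additive map on difference operators. -/
def coeffMap (f : R →+ S) : SkewMonoidAlgebra R G →+ SkewMonoidAlgebra S G where
  toFun P := ⟨P.coeff.mapRange f f.map_zero⟩
  map_zero' := by simp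
  map_add' P Q := by simp [Finsupp.mapRange_add]

theorem coeff_coeffMap (f : R →+ S) (P : SkewMonoidAlgebra R G) (g : G) :
    (coeffMap f P).coeff g = f (P.coeff g) :=
  rfl

theorem coeffMap_single (f : R →+ S) (g : G) (a : R) :
    coeffMap f (single g a) = single g (f a) :=
  congrArg ofCoeff Finsupp.mapRange_single

variable [One G] [LinearOrder G]

/-- The part `P₊` of a difference operator `P = ∑ a_g g` supported on the `g ≥ 1`. For `G` the
multiplicative copy of `ℤ` these are the nonnegative powers of the shift. -/
def nonnegPart : SkewMonoidAlgebra R G →+ SkewMonoidAlgebra R G where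
  toFun P := ⟨P.coeff.filter (1 ≤ ·)⟩
  map_zero' := congrArg ofCoeff (Finsupp.filter_zero _)
  map_add' P Q := by simp [Finsupp.filter_add]

theorem coeff_nonnegPart (P : SkewMonoidAlgebra R G) (g : G) :
    (nonnegPart P).coeff g = if 1 ≤ g then P.coeff g else 0 :=
  Finsupp.filter_apply ..

theorem nonnegPart_single (g : G) (a : R) :
    nonnegPart (single g a) = if 1 ≤ g then single g a else 0 := by
  split_ifs with hg
  · exact congrArg ofCoeff (Finsupp.filter_single_of_pos _ hg)
  · exact congrArg ofCoeff (Finsupp.filter_single_of_neg _ hg)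

theorem coeffMap_nonnegPart (f : R →+ S) (P : SkewMonoidAlgebra R G) :
    coeffMap f (nonnegPart P) = nonnegPart (coeffMap f P) := by
  ext g
  simp only [coeff_coeffMap, coeff_nonnegPart, apply_ite f, map_zero]

end Coefficients

/-- The Rota-Baxter identity of weight `-1`. -/
theorem nonnegPart_mul_nonnegPart {R G : Type*} [Ring R] [Monoid G] [LinearOrder G] [MulLeftMono G]
    [MulSemiringAction G R] (P Q : SkewMonoidAlgebra R G) :
    nonnegPart P * nonnegPart Q = nonnegPart (nonnegPart P * Q + P * nonnegPart Q - P * Q) := by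
  induction P using SkewMonoidAlgebra.induction_on with
  | zero => simp
  | add P₁ P₂ h₁ h₂ => simp only [map_add, map_sub, add_mul, h₁, h₂]; abel
  | single g a =>
    induction Q using SkewMonoidAlgebra.induction_on with
    | zero => simp
    | add Q₁ Q₂ h₁ h₂ => simp only [map_add, map_sub, mul_add, h₁, h₂]; abel
    | single h b =>
      rw [nonnegPart_single, nonnegPart_single]
      split_ifs with hg hh hh
      · simp [single_mul_single, nonnegPart_single, one_le_mul hg hh]
      · simp
      · simp
      · simp [single_mul_single, nonnegPart_single, mul_lt_one' (not_le.1 hg) (not_le.1 hh)]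

theorem coeffMap_mul_of_leibniz {R G : Type*} [Ring R] [Monoid G] [MulSemiringAction G R]
    {f : R →+ R} (hmul : ∀ x y, f (x * y) = f x * y + x * f y)
    (hsmul : ∀ (g : G) (x : R), f (g • x) = g • f x) (P Q : SkewMonoidAlgebra R G) :
    coeffMap f (P * Q) = coeffMap f P * Q + P * coeffMap f Q := by
  induction P using SkewMonoidAlgebra.induction_on with
  | zero => simp
  | add P₁ P₂ h₁ h₂ => simp only [map_add, add_mul, h₁, h₂]; abel
  | single g a =>
    induction Q using SkewMonoidAlgebra.induction_on with
    | zero => simp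
    | add Q₁ Q₂ h₁ h₂ => simp only [map_add, mul_add, h₁, h₂]; abel
    | single h b => simp only [coeffMap_single, single_mul_single, ← single_add, hmul, hsmul]

theorem lie_coeff_one_mem {R G : Type*} [CommRing R] [Group G] [MulSemiringAction G R]
    {N : AddSubgroup R} (hN : ∀ (g : G) (x : R), g • x - x ∈ N) (P Q : SkewMonoidAlgebra R G) :
    ⁅P, Q⁆.coeff 1 ∈ N := by
  induction P using SkewMonoidAlgebra.induction_on with
  | zero => simp [Ring.lie_def]
  | add P₁ P₂ h₁ h₂ =>
    have h : ⁅P₁ + P₂, Q⁆ = ⁅P₁, Q⁆ + ⁅P₂, Q⁆ := by simp only [Ring.lie_def]; noncomm_ring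
    simpa only [h, SkewMonoidAlgebra.coeff_add, Finsupp.add_apply] using N.add_mem h₁ h₂
  | single g a =>
    induction Q using SkewMonoidAlgebra.induction_on with
    | zero => simp [Ring.lie_def]
    | add Q₁ Q₂ h₁ h₂ =>
      have h : ⁅single g a, Q₁ + Q₂⁆ = ⁅single g a, Q₁⁆ + ⁅single g a, Q₂⁆ := by
        simp only [Ring.lie_def]; noncomm_ring
      simpa only [h, SkewMonoidAlgebra.coeff_add, Finsupp.add_apply] using N.add_mem h₁ h₂
    | single h b =>
      by_cases hgh : g * h = 1
      · obtain rfl := eq_inv_of_mul_eq_one_right hgh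
        have hN' := hN g (b * g⁻¹ • a)
        simpa [Ring.lie_def, single_mul_single, mul_comm] using hN'
      · have hhg : h * g ≠ 1 := fun h' ↦ hgh (mul_eq_one_comm.1 h')
        simp [Ring.lie_def, single_mul_single, hgh, hhg]

end DifferenceOperators

theorem exists_smul_sub_eq_zpow_smul_sub {G M : Type*} [Group G] [AddCommGroup M]
    [DistribMulAction G M] (g : G) (n : ℤ) (x : M) : ∃ y : M, g • y - y = g ^ n • x - x := by
  induction n using Int.induction_on with
  | zero => exact ⟨0, by simp⟩
  | succ n ih =>
    obtain ⟨y, hy⟩ := ih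
    refine ⟨y + g ^ (n : ℤ) • x, ?_⟩
    rw [zpow_add_one, ← (Commute.self_zpow g _).eq, mul_smul, smul_add, add_sub_add_comm, hy]
    abel
  | pred n ih =>
    obtain ⟨y, hy⟩ := ih
    refine ⟨y - g ^ (-(n : ℤ) - 1) • x, ?_⟩
    rw [smul_sub, smul_smul, ← zpow_one_add, add_sub_cancel, sub_sub_sub_comm, hy]
    abel

theorem eq_C_of_rename_eq_self {σ R α : Type*} [CommSemiring R] [LinearOrder α] {e : σ → σ}
    (height : σ → α) (he : ∀ i, height i < height (e i)) {f : MvPolynomial σ R}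
    (hf : rename e f = f) : f = C (constantCoeff f) := by
  classical
  refine vars_eq_empty_iff_eq_C.1 (Finset.not_nonempty_iff_eq_empty.1 fun hne ↦ ?_)
  obtain ⟨i, hi, hmin⟩ := f.vars.exists_min_image height hne
  obtain ⟨j, hj, rfl⟩ := mem_vars_rename e f (hf.symm ▸ hi)
  exact (he j).not_ge (hmin j hj)

section Shift

theorem wV_ne_zero (i : ℤ) : wV i ≠ 0 := X_ne_zero _

theorem Λs_C (c : ℤ) : Λs (C c) = C c := Λs.commutes c

theorem Λs_symm_C (c : ℤ) : Λs.symm (C c) = C c := Λs.symm.commutes c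

theorem Λz_zero_apply (x : 𝒜) : Λz 0 x = x := by simp [Λz]

theorem Λz_one_apply (x : 𝒜) : Λz 1 x = Λs x := by simp [Λz]

theorem Λz_neg_one_apply (x : 𝒜) : Λz (-1) x = Λs.symm x := by
  rw [Λz, zpow_neg_one]
  rfl

theorem Λz_add_apply (i j : ℤ) (x : 𝒜) : Λz (i + j) x = Λz i (Λz j x) := by
  rw [Λz, zpow_add]
  rfl

theorem Λz_X (i : ℤ) (s : ℤ ⊕ ℤ) : Λz i (X s) = X (s.map (i + ·) (i + ·)) := by
  induction i using Int.induction_on with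
  | zero => cases s <;> simp [Λz_zero_apply]
  | succ i ih =>
    rw [add_comm, Λz_add_apply, ih, Λz_one_apply]
    cases s <;> simp [Λs, add_assoc, add_comm]
  | pred i ih =>
    rw [sub_eq_neg_add, Λz_add_apply, ih, Λz_neg_one_apply]
    cases s <;> simp [Λs, add_assoc, add_comm]

theorem Λz_apply (i : ℤ) (x : 𝒜) : Λz i x = rename (Sum.map (i + ·) (i + ·)) x :=
  DFunLike.congr_fun (algHom_ext (f := (Λz i).toAlgHom) fun s ↦ by simp [Λz_X]) x

theorem constantCoeff_Λz (i : ℤ) (x : 𝒜) : constantCoeff (Λz i x) = constantCoeff x := by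
  rw [Λz_apply, constantCoeff_rename]

theorem constantCoeff_Λs (x : 𝒜) : constantCoeff (Λs x) = constantCoeff x :=
  constantCoeff_rename ..

theorem eq_C_of_Λs_eq_self {x : 𝒜} (hx : Λs x = x) : x = C (constantCoeff x) :=
  eq_C_of_rename_eq_self (Sum.elim id id) (by rintro (i | i) <;> simp) hx

theorem exists_eq_add_C_of_Λs_sub_eq {x y : 𝒜} (h : Λs x - x = Λs y - y) :
    ∃ c : ℤ, y = x + C c := by
  have hfix : Λs (y - x) = y - x := by
    rw [map_sub]
    linear_combination -h
  exact ⟨_, sub_eq_iff_eq_add'.1 (eq_C_of_Λs_eq_self hfix)⟩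

theorem eq_of_Λs_sub_eq {x y : 𝒜} (h : Λs x - x = Λs y - y)
    (h₀ : constantCoeff x = constantCoeff y) : x = y := by
  obtain ⟨c, rfl⟩ := exists_eq_add_C_of_Λs_sub_eq h
  have hc : c = 0 := by simpa using h₀
  rw [hc, C_0, add_zero]

theorem Λs_sub_eq_of_sub_Λs_symm_eq {x y : 𝒜} (h : x - Λs.symm x = y - Λs.symm y) :
    Λs x - x = Λs y - y := by
  simpa only [map_sub, AlgEquiv.apply_symm_apply] using congrArg Λs h

end Shift

section LaxOperator

open SkewMonoidAlgebra

/-- The action of `ℤ` on `𝒜` by powers of the shift, which turns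
`SkewMonoidAlgebra 𝒜 (Multiplicative ℤ)` into the ring of difference operators `∑ a_m Λ^m`. -/
instance : MulSemiringAction (Multiplicative ℤ) 𝒜 :=
  MulSemiringAction.compHom 𝒜 (zpowersHom (𝒜 ≃ₐ[ℤ] 𝒜) Λs)

theorem ofAdd_smul_eq_Λz (m : ℤ) (x : 𝒜) : ofAdd m • x = Λz m x := rfl

/-- The coefficients of a difference operator, indexed by the power of `Λ`. -/
def shiftCoeff (P : SkewMonoidAlgebra 𝒜 (Multiplicative ℤ)) (m : ℤ) : 𝒜 := P.coeff (ofAdd m)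

theorem shiftCoeff_injective : Function.Injective shiftCoeff := fun _ _ h ↦
  SkewMonoidAlgebra.ext fun g ↦ congrFun h g.toAdd

/-- The Lax operator `L = Λ + v_0 + w_0 Λ⁻¹`. -/
def lax : SkewMonoidAlgebra 𝒜 (Multiplicative ℤ) :=
  single (ofAdd 1) 1 + single (ofAdd 0) (vV 0) + single (ofAdd (-1)) (wV 0)

theorem shiftCoeff_lax_mul (P : SkewMonoidAlgebra 𝒜 (Multiplicative ℤ)) :
    shiftCoeff (lax * P) = mulL (shiftCoeff P) := by
  funext m
  simp only [shiftCoeff, lax, mulL, add_mul, SkewMonoidAlgebra.coeff_add, Finsupp.add_apply,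
    coeff_single_mul, ← ofAdd_neg, ← ofAdd_add, ofAdd_smul_eq_Λz, Λz_zero_apply, Λz_one_apply,
    Λz_neg_one_apply, one_mul, neg_neg, neg_zero, zero_add, neg_add_eq_sub, add_comm 1 m]

theorem shiftCoeff_mul_lax (P : SkewMonoidAlgebra 𝒜 (Multiplicative ℤ)) :
    shiftCoeff (P * lax) = mulRL (shiftCoeff P) := by
  funext m
  simp only [shiftCoeff, lax, mulRL, mul_add, SkewMonoidAlgebra.coeff_add, Finsupp.add_apply,
    coeff_mul_single, ← ofAdd_neg, ← ofAdd_add, ofAdd_smul_eq_Λz, map_one, mul_one, neg_neg,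
    neg_zero, add_zero, ← sub_eq_add_neg]

theorem shiftCoeff_lax_pow (k : ℕ) : shiftCoeff (lax ^ k) = Lpow k := by
  induction k with
  | zero =>
    funext m
    simp [shiftCoeff, Lpow, oneOp, Finsupp.single_apply, eq_comm (a := (1 : Multiplicative ℤ))]
  | succ k ih => rw [pow_succ', shiftCoeff_lax_mul, ih, Lpow, Lpow, Function.iterate_succ_apply']

theorem shiftCoeff_nonnegPart (P : SkewMonoidAlgebra 𝒜 (Multiplicative ℤ)) :
    shiftCoeff (nonnegPart P) = plusPart (shiftCoeff P) :=
  funext fun m ↦ coeff_nonnegPart P (ofAdd m)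

theorem shiftCoeff_lie_lax (P : SkewMonoidAlgebra 𝒜 (Multiplicative ℤ)) (m : ℤ) :
    shiftCoeff ⁅P, lax⁆ m = mulRL (shiftCoeff P) m - mulL (shiftCoeff P) m := by
  rw [← shiftCoeff_lax_mul, ← shiftCoeff_mul_lax, Ring.lie_def, shiftCoeff,
    SkewMonoidAlgebra.coeff_sub]
  rfl

theorem shiftCoeff_lie_lax_nonnegPart (k : ℕ) (m : ℤ) :
    shiftCoeff ⁅nonnegPart (lax ^ (k + 1)), lax⁆ m = brkt k m := by
  rw [shiftCoeff_lie_lax, shiftCoeff_nonnegPart, shiftCoeff_lax_pow, brkt]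

theorem brkt_eq_zero_of_lt_neg_one {k : ℕ} {m : ℤ} (hm : m < -1) : brkt k m = 0 := by
  have h (n : ℤ) (hn : n < 0) : plusPart (Lpow (k + 1)) n = 0 := if_neg hn.not_ge
  simp [brkt, mulRL, mulL, h (m - 1) (by lia), h m (by lia), h (m + 1) (by lia)]

/-- Since `L` commutes with its powers, `[L₊^{k+1}, L] = [L₊^{k+1} - L^{k+1}, L]`, where the left
entry has only negative powers of `Λ`. -/
theorem brkt_eq_zero_of_pos {k : ℕ} {m : ℤ} (hm : 0 < m) : brkt k m = 0 := by
  have hcomm : ⁅nonnegPart (lax ^ (k + 1)), lax⁆ =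
      ⁅nonnegPart (lax ^ (k + 1)) - lax ^ (k + 1), lax⁆ := by
    rw [Ring.lie_def, Ring.lie_def, sub_mul, mul_sub, ← pow_succ, ← pow_succ',
      sub_sub_sub_cancel_right]
  have hneg (n : ℤ) (hn : 0 ≤ n) :
      shiftCoeff (nonnegPart (lax ^ (k + 1)) - lax ^ (k + 1)) n = 0 := by
    rw [shiftCoeff, SkewMonoidAlgebra.coeff_sub, Finsupp.sub_apply, coeff_nonnegPart,
      if_pos (show 1 ≤ ofAdd n from hn), sub_self]
  rw [← shiftCoeff_lie_lax_nonnegPart, hcomm, shiftCoeff_lie_lax]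
  simp [mulRL, mulL, hneg (m - 1) (by lia), hneg m (by lia), hneg (m + 1) (by lia)]

end LaxOperator

section TodaFlows

open SkewMonoidAlgebra

theorem Dtoda_vV (k : ℕ) (i : ℤ) : Dtoda k (vV i) = Λz i (brkt k 0) :=
  mkDerivation_X ..

theorem Dtoda_wV (k : ℕ) (i : ℤ) : Dtoda k (wV i) = Λz i (brkt k (-1)) :=
  mkDerivation_X ..

theorem Dtoda_Λz (k : ℕ) (i : ℤ) (x : 𝒜) : Dtoda k (Λz i x) = Λz i (Dtoda k x) := by
  induction x using MvPolynomial.induction_on with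
  | C a =>
    have hC : Λz i (C a) = C a := (Λz i).commutes a
    rw [hC, derivation_C, map_zero]
  | add p q hp hq => simp only [map_add, hp, hq]
  | mul_X p s hp =>
    have hX : Dtoda k (Λz i (X s)) = Λz i (Dtoda k (X s)) := by
      rw [Λz_X]
      rcases s with j | j
      · exact (Dtoda_vV k (i + j)).trans
          ((Λz_add_apply ..).trans (congrArg (Λz i) (Dtoda_vV k j).symm))
      · exact (Dtoda_wV k (i + j)).trans
          ((Λz_add_apply ..).trans (congrArg (Λz i) (Dtoda_wV k j).symm))
    simp only [map_mul, Derivation.leibniz, smul_eq_mul, map_add, hp, hX]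

theorem Dtoda_Λs (k : ℕ) (x : 𝒜) : Dtoda k (Λs x) = Λs (Dtoda k x) := by
  simpa only [Λz_one_apply] using Dtoda_Λz k 1 x

theorem Dtoda_Λs_symm (k : ℕ) (x : 𝒜) : Dtoda k (Λs.symm x) = Λs.symm (Dtoda k x) := by
  simpa only [Λz_neg_one_apply] using Dtoda_Λz k (-1) x

/-- The derivation `D_k` acting coefficientwise on difference operators. -/
def todaFlow (k : ℕ) :
    SkewMonoidAlgebra 𝒜 (Multiplicative ℤ) →+ SkewMonoidAlgebra 𝒜 (Multiplicative ℤ) :=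
  coeffMap (Dtoda k : 𝒜 →+ 𝒜)

theorem shiftCoeff_todaFlow (k : ℕ) (P : SkewMonoidAlgebra 𝒜 (Multiplicative ℤ)) (m : ℤ) :
    shiftCoeff (todaFlow k P) m = Dtoda k (shiftCoeff P m) :=
  rfl

theorem todaFlow_mul (k : ℕ) (P Q : SkewMonoidAlgebra 𝒜 (Multiplicative ℤ)) :
    todaFlow k (P * Q) = todaFlow k P * Q + P * todaFlow k Q :=
  coeffMap_mul_of_leibniz (fun x y ↦ by simp [mul_comm, add_comm]) (fun g x ↦ Dtoda_Λz k g.toAdd x)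
    P Q

theorem todaFlow_lax (k : ℕ) : todaFlow k lax = ⁅nonnegPart (lax ^ (k + 1)), lax⁆ := by
  have hlax : todaFlow k lax = single (ofAdd 0) (brkt k 0) + single (ofAdd (-1)) (brkt k (-1)) := by
    simp [todaFlow, lax, coeffMap_single, Dtoda_vV, Dtoda_wV, Λz_zero_apply]
  refine shiftCoeff_injective (funext fun m ↦ ?_)
  rw [shiftCoeff_lie_lax_nonnegPart, hlax]
  simp only [shiftCoeff, SkewMonoidAlgebra.coeff_add, Finsupp.add_apply, coeff_single,
    Finsupp.single_apply, EmbeddingLike.apply_eq_iff_eq]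
  obtain hm | rfl | rfl | hm : m < -1 ∨ m = -1 ∨ m = 0 ∨ 0 < m := by lia
  · simp [brkt_eq_zero_of_lt_neg_one hm, show 0 ≠ m by lia, show -1 ≠ m by lia]
  · simp
  · simp
  · simp [brkt_eq_zero_of_pos hm, show 0 ≠ m by lia, show -1 ≠ m by lia]

theorem todaFlow_lax_pow (k n : ℕ) :
    todaFlow k (lax ^ n) = ⁅nonnegPart (lax ^ (k + 1)), lax ^ n⁆ :=
  map_pow_eq_lie_of_map_eq_lie (todaFlow_mul k) (todaFlow_lax k) n

theorem todaFlow_zero_curvature (q r : ℕ) :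
    todaFlow r (nonnegPart (lax ^ (q + 1))) - todaFlow q (nonnegPart (lax ^ (r + 1))) +
      ⁅nonnegPart (lax ^ (q + 1)), nonnegPart (lax ^ (r + 1))⁆ = 0 := by
  have hflow (k n : ℕ) : todaFlow k (nonnegPart (lax ^ n)) =
      nonnegPart ⁅nonnegPart (lax ^ (k + 1)), lax ^ n⁆ := by
    rw [← todaFlow_lax_pow, todaFlow, coeffMap_nonnegPart]
  rw [hflow, hflow, lie_map_map_of_rotaBaxter nonnegPart_mul_nonnegPart (Commute.pow_pow_self ..)]
  abel

theorem Dtoda_comm (q r : ℕ) (x : 𝒜) : Dtoda r (Dtoda q x) = Dtoda q (Dtoda r x) := by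
  have hlax : todaFlow r (todaFlow q lax) = todaFlow q (todaFlow r lax) :=
    lax_flows_comm (todaFlow_mul q) (todaFlow_mul r) (todaFlow_lax q) (todaFlow_lax r)
      (todaFlow_zero_curvature q r)
  have hbrkt (m : ℤ) : Dtoda r (brkt q m) = Dtoda q (brkt r m) := by
    simpa only [shiftCoeff_todaFlow, todaFlow_lax, shiftCoeff_lie_lax_nonnegPart] using
      congrArg (shiftCoeff · m) hlax
  have hlie : ⁅Dtoda r, Dtoda q⁆ = 0 := by
    refine derivation_ext fun s ↦ ?_
    rw [Derivation.commutator_apply, Derivation.zero_apply, sub_eq_zero]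
    rcases s with i | i
    · rw [← vV, Dtoda_vV, Dtoda_vV, Dtoda_Λz, Dtoda_Λz, hbrkt]
    · rw [← wV, Dtoda_wV, Dtoda_wV, Dtoda_Λz, Dtoda_Λz, hbrkt]
  rw [← sub_eq_zero, ← Derivation.commutator_apply, hlie, Derivation.zero_apply]

theorem constantCoeff_brkt (k : ℕ) (m : ℤ) : constantCoeff (brkt k m) = 0 := by
  simp [brkt, mulRL, mulL, vV, wV, constantCoeff_Λz, constantCoeff_Λs]

theorem constantCoeff_Dtoda (k : ℕ) (x : 𝒜) : constantCoeff (Dtoda k x) = 0 := by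
  induction x using MvPolynomial.induction_on with
  | C a => rw [derivation_C, map_zero]
  | add p q hp hq => rw [map_add, map_add, hp, hq, add_zero]
  | mul_X p s hp =>
    have hX : constantCoeff (Dtoda k (X s)) = 0 := by
      rcases s with i | i
      · rw [← vV, Dtoda_vV, constantCoeff_Λz, constantCoeff_brkt]
      · rw [← wV, Dtoda_wV, constantCoeff_Λz, constantCoeff_brkt]
    simp [hp, hX]

end TodaFlows

section TauStructures

theorem Dtoda_wV_zero_eq_mul_sub (p : ℕ) :
    Dtoda p (wV 0) = wV 0 * (Lpow (p + 1) 0 - Λs.symm (Lpow (p + 1) 0)) := by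
  have hneg (m : ℤ) (hm : m < 0) : plusPart (Lpow (p + 1)) m = 0 := if_neg hm.not_ge
  have hzero : plusPart (Lpow (p + 1)) 0 = Lpow (p + 1) 0 := if_pos le_rfl
  rw [Dtoda_wV, Λz_zero_apply, brkt, mulRL, mulL, neg_add_cancel, hneg (-1 - 1) (by lia),
    hneg (-1) (by lia), hzero, Λz_zero_apply, map_zero]
  ring

theorem exists_Λs_sub_eq_Dtoda_Lpow (p q : ℕ) :
    ∃ Ω : 𝒜, constantCoeff Ω = 0 ∧ Λs Ω - Ω = Dtoda q (Lpow (p + 1) 0) := by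
  have hres : Dtoda q (Lpow (p + 1) 0) =
      ⁅nonnegPart (lax ^ (q + 1)), lax ^ (p + 1)⁆.coeff (ofAdd 0) := by
    rw [← shiftCoeff_lax_pow, ← shiftCoeff_todaFlow, todaFlow_lax_pow, shiftCoeff]
  have hmem : Dtoda q (Lpow (p + 1) 0) ∈ ((Λs : 𝒜 →+ 𝒜) - AddMonoidHom.id 𝒜).range := by
    rw [hres]
    refine lie_coeff_one_mem (fun g x ↦ ?_) _ _
    obtain ⟨y, hy⟩ := exists_smul_sub_eq_zpow_smul_sub (ofAdd (1 : ℤ)) g.toAdd x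
    rw [← ofAdd_zsmul, smul_eq_mul, mul_one, ofAdd_toAdd, ofAdd_smul_eq_Λz, Λz_one_apply] at hy
    exact ⟨y, hy⟩
  obtain ⟨y, hy⟩ := hmem
  refine ⟨y - C (constantCoeff y), by simp, ?_⟩
  rw [map_sub, Λs_C, sub_sub_sub_cancel_right, ← hy]
  rfl

/-- Both sides have the same image under `1 - Λ⁻¹` because `D_q (D_p w_0) = D_p (D_q w_0)`. -/
theorem Dtoda_Lpow_comm (p q : ℕ) :
    Dtoda q (Lpow (p + 1) 0) = Dtoda p (Lpow (q + 1) 0) := by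
  have hw := Dtoda_comm p q (wV 0)
  simp only [Dtoda_wV_zero_eq_mul_sub, Derivation.leibniz, smul_eq_mul, map_sub,
    Dtoda_Λs_symm] at hw
  have hdiff : Dtoda q (Lpow (p + 1) 0) - Λs.symm (Dtoda q (Lpow (p + 1) 0)) =
      Dtoda p (Lpow (q + 1) 0) - Λs.symm (Dtoda p (Lpow (q + 1) 0)) :=
    mul_left_cancel₀ (wV_ne_zero 0) (by linear_combination hw)
  exact eq_of_Λs_sub_eq (Λs_sub_eq_of_sub_Λs_symm_eq hdiff)
    (by rw [constantCoeff_Dtoda, constantCoeff_Dtoda])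

attribute [ext] TauStructure

namespace TauStructure

theorem nonempty : Nonempty TauStructure := by
  choose Ω hΩ₀ hΩ using exists_Λs_sub_eq_Dtoda_Lpow
  exact ⟨{
    Ω, S p := Lpow (p + 1) 0
    symm p q := eq_of_Λs_sub_eq (by rw [hΩ, hΩ, Dtoda_Lpow_comm]) (by rw [hΩ₀, hΩ₀])
    compat p q r := eq_of_Λs_sub_eq
      (by rw [← Dtoda_Λs, ← Dtoda_Λs, ← map_sub, ← map_sub, hΩ, hΩ, Dtoda_comm])
      (by rw [constantCoeff_Dtoda, constantCoeff_Dtoda])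
    shift_eq := hΩ
    w_eq p := (Dtoda_wV_zero_eq_mul_sub p).symm }⟩

/-- The tau-structure `(Ω_{p,q} + c_{p,q}, S_p + a_p)`. -/
def addConst (T : TauStructure) (c : ℕ → ℕ → ℤ) (a : ℕ → ℤ) (hc : ∀ p q, c p q = c q p) :
    TauStructure where
  Ω p q := T.Ω p q + C (c p q)
  S p := T.S p + C (a p)
  symm p q := by rw [T.symm, hc]
  compat p q r := by simp only [map_add, derivation_C, T.compat]
  shift_eq p q := by rw [map_add, map_add, derivation_C, Λs_C, ← T.shift_eq]; ring
  w_eq p := by rw [map_add, Λs_symm_C, add_sub_add_right_eq_sub, T.w_eq]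

theorem exists_eq_add_C (T T' : TauStructure) : ∃ (c : ℕ → ℕ → ℤ) (a : ℕ → ℤ),
    (∀ p q, c p q = c q p) ∧ (∀ p q, T'.Ω p q = T.Ω p q + C (c p q)) ∧
      ∀ p, T'.S p = T.S p + C (a p) := by
  have hS (p : ℕ) : ∃ a : ℤ, T'.S p = T.S p + C a := by
    refine exists_eq_add_C_of_Λs_sub_eq (Λs_sub_eq_of_sub_Λs_symm_eq ?_)
    exact mul_left_cancel₀ (wV_ne_zero 0) ((T.w_eq p).trans (T'.w_eq p).symm)
  choose a ha using hS
  have hΩ (p q : ℕ) : ∃ c : ℤ, T'.Ω p q = T.Ω p q + C c := by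
    apply exists_eq_add_C_of_Λs_sub_eq
    rw [T.shift_eq, T'.shift_eq, ha, map_add, derivation_C, add_zero]
  choose c hc using hΩ
  refine ⟨c, a, fun p q ↦ C_injective _ ℤ (add_left_cancel (a := T.Ω p q) ?_), hc, ha⟩
  rw [← hc, T'.symm, hc, T.symm]

theorem isCanonical_iff {T : TauStructure} : T.IsCanonical ↔
    (∀ p q, constantCoeff (T.Ω p q) = 0) ∧ ∀ p, constantCoeff (T.S p) = 0 := by
  rw [IsCanonical, eval_zero']

theorem existsUnique_isCanonical : ∃! T : TauStructure, T.IsCanonical := by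
  simp only [isCanonical_iff]
  obtain ⟨T⟩ := nonempty
  refine existsUnique_of_exists_of_unique
    ⟨T.addConst (fun p q ↦ -constantCoeff (T.Ω p q)) (fun p ↦ -constantCoeff (T.S p))
      fun p q ↦ by rw [T.symm], by simp [addConst]⟩ ?_
  rintro T₁ T₂ ⟨hΩ₁, hS₁⟩ ⟨hΩ₂, hS₂⟩
  obtain ⟨c, a, -, hc, ha⟩ := exists_eq_add_C T₁ T₂
  have hc₀ (p q : ℕ) : c p q = 0 := by simpa [hc, hΩ₁] using hΩ₂ p q
  have ha₀ (p : ℕ) : a p = 0 := by simpa [ha, hS₁] using hS₂ p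
  ext1
  · funext p q
    rw [hc, hc₀, C_0, add_zero]
  · funext p
    rw [ha, ha₀, C_0, add_zero]

end TauStructure

end TauStructures

/-- A tau-structure associated to the Toda lattice derivations exists,
and it is unique up to replacing Ω_{p,q} by Ω_{p,q} + c_{p,q} and S_p by S_p + a_p,
where c_{p,q} = c_{q,p} and a_p are arbitrary constants (and any such replacement is
again a tau-structure). In particular, there is a unique canonical tau-structure, i.e.,
one for which every Ω_{p,q} and every S_p vanishes under v_i = 0, w_i = 0 (i ∈ ℤ). -/
theorem tau_structure_exists_unique :
    (∃ _ : TauStructure, True) ∧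
    (∀ T T' : TauStructure, ∃ (c : ℕ → ℕ → ℤ) (a : ℕ → ℤ),
      (∀ p q, c p q = c q p) ∧
      (∀ p q, T'.Ω p q = T.Ω p q + MvPolynomial.C (c p q)) ∧
      (∀ p, T'.S p = T.S p + MvPolynomial.C (a p))) ∧
    (∀ (T : TauStructure) (c : ℕ → ℕ → ℤ) (a : ℕ → ℤ), (∀ p q, c p q = c q p) →
      ∃ T' : TauStructure,
        (∀ p q, T'.Ω p q = T.Ω p q + MvPolynomial.C (c p q)) ∧
        (∀ p, T'.S p = T.S p + MvPolynomial.C (a p))) ∧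
    (∃! T : TauStructure, T.IsCanonical) := by
  obtain ⟨T₀⟩ := TauStructure.nonempty
  exact ⟨⟨T₀, trivial⟩, TauStructure.exists_eq_add_C,
    fun T c a hc ↦ ⟨T.addConst c a hc, fun _ _ ↦ rfl, fun _ ↦ rfl⟩,
    TauStructure.existsUnique_isCanonical⟩

end
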